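/- The Airy function satisfies the classical asymptotics on the positive real axis: lim_{w→+∞} 2√π · w^{1/4} · e^{2 w^{3/2}/3} · Ai(w) = 1. -/

import Mathlib

open Filter MeasureTheory Real

/-- The Airy function, defined for real `x` by
`Ai(x) = (2π)⁻¹ · lim_{R→∞} ∫_{-R}^{R} e^{i(t³/3 + x t)} dt`. -/
noncomputable def Ai (x : ℝ) : ℂ :=
  ((2 * Real.pi : ℝ)⁻¹ : ℂ) * limUnder Filter.atTop
    (fun R : ℝ => ∫ t in (-R)..R, Complex.exp (Complex.I * ((t : ℂ)^3 / 3 + (x : ℂ) * t)))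

/-!
For every `s > 0` the contour in the integral for `Ai x` can be moved from the real line to the
horizontal line `Im z = s`, where the integrand decays like a Gaussian. For `x = q ^ 4` the
integrand has a saddle point at `q ^ 2 * I`. On the line through it, in the coordinate
`z = u / q + q ^ 2 * I`, the integrand is `e ^ (-2 q ^ 6 / 3)` times the Gaussian `e ^ (-u ^ 2)`
with the oscillating factor `e ^ (i u ^ 3 / (3 q ^ 3))`, which disappears in the limit `q → ∞` and
leaves `∫ e ^ (-u ^ 2) = √π`.
-/

open scoped Topology

section HorizontalShift

variable {E : Type*} [NormedAddCommGroup E] [NormedSpace ℂ E] {f : ℂ → E} {s : ℝ}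

lemma intervalIntegral_eq_horizontal_shift
    (hf : DifferentiableOn ℂ f (Complex.im ⁻¹' Set.uIcc 0 s)) (a b : ℝ) :
    ∫ t in a..b, f t = (∫ t in a..b, f (t + s * Complex.I))
      - Complex.I • (∫ y in (0 : ℝ)..s, f (b + y * Complex.I))
      + Complex.I • ∫ y in (0 : ℝ)..s, f (a + y * Complex.I) := by
  have boundary_eq_zero := Complex.integral_boundary_rect_eq_zero_of_differentiableOn f
    (a : ℂ) ⟨b, s⟩ (hf.mono fun z hz => hz.2)
  simp only [Complex.ofReal_re, Complex.ofReal_im, Complex.ofReal_zero, zero_mul, add_zero]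
    at boundary_eq_zero
  rw [← sub_eq_zero, ← boundary_eq_zero]
  abel

lemma tendsto_intervalIntegral_horizontal_shift
    (hf : DifferentiableOn ℂ f (Complex.im ⁻¹' Set.uIcc 0 s))
    (hint : Integrable fun t : ℝ => f (t + s * Complex.I))
    (hside : Tendsto (fun r : ℝ => ∫ y in (0 : ℝ)..s, f (r + y * Complex.I))
      (cocompact ℝ) (𝓝 0)) :
    Tendsto (fun R : ℝ => ∫ t in (-R)..R, f t) atTop (𝓝 (∫ t : ℝ, f (t + s * Complex.I))) := by
  simp_rw [intervalIntegral_eq_horizontal_shift hf]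
  have hline := intervalIntegral_tendsto_integral hint tendsto_neg_atTop_atBot tendsto_id
  have hright := (hside.mono_left atTop_le_cocompact).const_smul Complex.I
  have hleft := ((hside.mono_left atBot_le_cocompact).comp tendsto_neg_atTop_atBot).const_smul
    Complex.I
  simpa using (hline.sub hright).add hleft

end HorizontalShift

lemma continuous_integral_cexp_mul_I_smul {α E : Type*} [MeasurableSpace α] {μ : Measure α}
    [NormedAddCommGroup E] [NormedSpace ℂ E] {φ : α → ℝ} (hφ : AEMeasurable φ μ)
    {g : α → E} (hg : Integrable g μ) :
    Continuous fun ε : ℝ => ∫ u, Complex.exp ((ε * φ u : ℝ) * Complex.I) • g u ∂μ := by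
  refine continuous_of_dominated (bound := fun u => ‖g u‖) (fun ε => ?_) (fun ε => ?_) hg.norm ?_
  · exact AEStronglyMeasurable.smul (by fun_prop) hg.aestronglyMeasurable
  · exact .of_forall fun u => by rw [norm_smul, Complex.norm_exp_ofReal_mul_I, one_mul]
  · exact .of_forall fun u => by fun_prop

lemma tendsto_integral_cexp_mul_I_mul_gaussian {φ : ℝ → ℝ} (hφ : AEMeasurable φ) :
    Tendsto (fun ε : ℝ => ∫ u, Complex.exp ((ε * φ u : ℝ) * Complex.I) * (exp (-u ^ 2) : ℝ))
      (𝓝 0) (𝓝 (√π : ℝ)) := by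
  have gaussian_integrable : Integrable fun u : ℝ => ((exp (-u ^ 2) : ℝ) : ℂ) := by
    simpa using (integrable_exp_neg_mul_sq one_pos).ofReal (𝕜 := ℂ)
  have gaussian_integral : ∫ u : ℝ, ((exp (-u ^ 2) : ℝ) : ℂ) = (√π : ℝ) := by
    rw [integral_complex_ofReal]
    simpa using integral_gaussian 1
  rw [← gaussian_integral]
  simpa using (continuous_integral_cexp_mul_I_smul hφ gaussian_integrable).tendsto 0

/-- The integrand of the Airy function `Ai x`, extended to an entire function of `z` so that its
contour of integration can be deformed. -/
noncomputable def airyIntegrand (x : ℝ) (z : ℂ) : ℂ :=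
  Complex.exp (Complex.I * (z ^ 3 / 3 + x * z))

lemma differentiable_airyIntegrand (x : ℝ) : Differentiable ℂ (airyIntegrand x) := by
  unfold airyIntegrand
  fun_prop

lemma airyIntegrand_add_mul_I (x t y : ℝ) :
    airyIntegrand x (t + y * Complex.I) =
      Complex.exp ((y ^ 3 / 3 - x * y - y * t ^ 2 : ℝ) +
        (t ^ 3 / 3 - t * y ^ 2 + x * t : ℝ) * Complex.I) := by
  unfold airyIntegrand
  congr 1
  push_cast
  linear_combination (t ^ 2 * y + x * y + t * y ^ 2 * Complex.I
    + y ^ 3 / 3 * (Complex.I ^ 2 - 1)) * Complex.I_sq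

lemma norm_airyIntegrand_add_mul_I (x t y : ℝ) :
    ‖airyIntegrand x (t + y * Complex.I)‖ = exp (y ^ 3 / 3 - x * y - y * t ^ 2) := by
  rw [airyIntegrand_add_mul_I, Complex.norm_exp, Complex.add_re, Complex.re_ofReal_mul,
    Complex.ofReal_re, Complex.I_re, mul_zero, add_zero]

lemma integrable_airyIntegrand_add_mul_I (x : ℝ) {s : ℝ} (hs : 0 < s) :
    Integrable fun t : ℝ => airyIntegrand x (t + s * Complex.I) := by
  have hcont : Continuous fun t : ℝ => airyIntegrand x (t + s * Complex.I) :=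
    (differentiable_airyIntegrand x).continuous.comp (by fun_prop)
  refine ((integrable_exp_neg_mul_sq hs).const_mul (exp (s ^ 3 / 3 - x * s))).mono'
    hcont.aestronglyMeasurable (.of_forall fun t => ?_)
  rw [norm_airyIntegrand_add_mul_I, ← exp_add, neg_mul, ← sub_eq_add_neg]

lemma tendsto_airyIntegrand_add_mul_I_cocompact (x : ℝ) {y : ℝ} (hy : 0 < y) :
    Tendsto (fun r : ℝ => airyIntegrand x (r + y * Complex.I)) (cocompact ℝ) (𝓝 0) := by
  have hsq : Tendsto (fun r : ℝ => r ^ 2) (cocompact ℝ) atTop := by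
    simpa only [Function.comp_def, norm_eq_abs, sq_abs] using
      (tendsto_pow_atTop two_ne_zero).comp (tendsto_norm_cocompact_atTop (E := ℝ))
  rw [tendsto_zero_iff_norm_tendsto_zero]
  simp_rw [norm_airyIntegrand_add_mul_I]
  exact tendsto_exp_atBot.comp
    (tendsto_atBot_add_const_left _ _ (tendsto_neg_atTop_atBot.comp (hsq.const_mul_atTop hy)))

lemma tendsto_integral_vertical_airyIntegrand (x : ℝ) {s : ℝ} (hs : 0 ≤ s) :
    Tendsto (fun r : ℝ => ∫ y in (0 : ℝ)..s, airyIntegrand x (r + y * Complex.I))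
      (cocompact ℝ) (𝓝 0) := by
  have : IsCountablyGenerated (cocompact ℝ) := by
    rw [cocompact_eq_atBot_atTop]
    infer_instance
  have hlim := intervalIntegral.tendsto_integral_filter_of_dominated_convergence
    (μ := volume) (a := 0) (b := s) (l := cocompact ℝ)
    (F := fun r y : ℝ => airyIntegrand x (r + y * Complex.I)) (f := fun _ => 0)
    (fun y => exp (y ^ 3 / 3 - x * y)) (.of_forall fun r => ?_)
    (.of_forall fun r => .of_forall fun y hy => ?_)
    (Continuous.intervalIntegrable (by fun_prop) _ _) (.of_forall fun y hy => ?_)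
  · simpa using hlim
  · have hcont : Continuous fun y : ℝ => airyIntegrand x (r + y * Complex.I) :=
      (differentiable_airyIntegrand x).continuous.comp (by fun_prop)
    exact hcont.aestronglyMeasurable
  · rw [Set.uIoc_of_le hs] at hy
    rw [norm_airyIntegrand_add_mul_I, exp_le_exp]
    exact sub_le_self _ (mul_nonneg hy.1.le (sq_nonneg r))
  · rw [Set.uIoc_of_le hs] at hy
    exact tendsto_airyIntegrand_add_mul_I_cocompact x hy.1

lemma Ai_eq_integral_add_mul_I (x : ℝ) {s : ℝ} (hs : 0 < s) :
    Ai x = ((2 * π : ℝ)⁻¹ : ℂ) * ∫ t : ℝ, airyIntegrand x (t + s * Complex.I) :=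
  congrArg _ (tendsto_intervalIntegral_horizontal_shift
    (differentiable_airyIntegrand x).differentiableOn (integrable_airyIntegrand_add_mul_I x hs)
    (tendsto_integral_vertical_airyIntegrand x hs.le)).limUnder_eq

lemma airyIntegrand_pow_four_saddle {q : ℝ} (hq : q ≠ 0) (u : ℝ) :
    airyIntegrand (q ^ 4) ((q⁻¹ * u : ℝ) + (q ^ 2 : ℝ) * Complex.I) =
      (exp (-(2 * q ^ 6 / 3)) : ℝ) *
        (Complex.exp (((q ^ 3)⁻¹ * (u ^ 3 / 3) : ℝ) * Complex.I) * (exp (-u ^ 2) : ℝ)) := by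
  have hre : (q ^ 2) ^ 3 / 3 - q ^ 4 * q ^ 2 - q ^ 2 * (q⁻¹ * u) ^ 2 =
      -(2 * q ^ 6 / 3) + -u ^ 2 := by
    field_simp
    ring
  have him : (q⁻¹ * u) ^ 3 / 3 - q⁻¹ * u * (q ^ 2) ^ 2 + q ^ 4 * (q⁻¹ * u) =
      (q ^ 3)⁻¹ * (u ^ 3 / 3) := by
    field_simp
    ring
  rw [airyIntegrand_add_mul_I, hre, him, Complex.exp_add, ← Complex.ofReal_exp, exp_add,
    Complex.ofReal_mul]
  ring

lemma Ai_pow_four {q : ℝ} (hq : 0 < q) :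
    Ai (q ^ 4) = ((2 * π * q : ℝ)⁻¹ : ℂ) * ((exp (-(2 * q ^ 6 / 3)) : ℝ) *
      ∫ u : ℝ, Complex.exp (((q ^ 3)⁻¹ * (u ^ 3 / 3) : ℝ) * Complex.I) * (exp (-u ^ 2) : ℝ)) := by
  have hscale := Measure.integral_comp_mul_left
    (fun t : ℝ => airyIntegrand (q ^ 4) (t + (q ^ 2 : ℝ) * Complex.I)) q⁻¹
  simp_rw [airyIntegrand_pow_four_saddle hq.ne', integral_const_mul] at hscale
  rw [Ai_eq_integral_add_mul_I _ (pow_pos hq 2), hscale, inv_inv, abs_of_pos hq,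
    Complex.real_smul]
  have hq' : (q : ℂ) ≠ 0 := Complex.ofReal_ne_zero.mpr hq.ne'
  push_cast
  field_simp

lemma exp_mul_Ai_pow_four {q : ℝ} (hq : 0 < q) :
    ((2 * √π * q * exp (2 * q ^ 6 / 3) : ℝ) : ℂ) * Ai (q ^ 4) =
      ((√π : ℝ) : ℂ)⁻¹ *
        ∫ u : ℝ, Complex.exp (((q ^ 3)⁻¹ * (u ^ 3 / 3) : ℝ) * Complex.I) * (exp (-u ^ 2) : ℝ) := by
  have hcoeff : 2 * √π * q * exp (2 * q ^ 6 / 3) * ((2 * π * q)⁻¹ * exp (-(2 * q ^ 6 / 3))) =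
      (√π)⁻¹ := by
    rw [exp_neg]
    field_simp
    exact sq_sqrt pi_pos.le
  rw [Ai_pow_four hq, ← Complex.ofReal_inv √π, ← hcoeff]
  push_cast
  ring

lemma tendsto_exp_mul_Ai_pow_four :
    Tendsto (fun q : ℝ => ((2 * √π * q * exp (2 * q ^ 6 / 3) : ℝ) : ℂ) * Ai (q ^ 4))
      atTop (𝓝 1) := by
  have hε : Tendsto (fun q : ℝ => (q ^ 3)⁻¹) atTop (𝓝 0) :=
    (tendsto_pow_atTop three_ne_zero).inv_tendsto_atTop
  have hφ : AEMeasurable fun u : ℝ => u ^ 3 / 3 := by fun_prop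
  have hlim := ((tendsto_integral_cexp_mul_I_mul_gaussian hφ).comp hε).const_mul
    ((√π : ℝ) : ℂ)⁻¹
  rw [inv_mul_cancel₀ (Complex.ofReal_ne_zero.mpr (sqrt_pos.mpr pi_pos).ne')] at hlim
  refine hlim.congr' ?_
  filter_upwards [eventually_gt_atTop 0] with q hq using (exp_mul_Ai_pow_four hq).symm

/-- Classical asymptotics of the Airy function on the positive real axis:
`2√π · w^{1/4} · e^{2 w^{3/2}/3} · Ai(w) → 1` as `w → +∞`. -/
theorem airy_asymptotics :
    Filter.Tendsto
      (fun w : ℝ =>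
        ((2 * Real.sqrt Real.pi * w ^ ((1:ℝ)/4) * Real.exp (2 * w ^ ((3:ℝ)/2) / 3) : ℝ) : ℂ)
          * Ai w)
      Filter.atTop (nhds 1) := by
  have hroot : Tendsto (fun w : ℝ => w ^ ((1 : ℝ) / 4)) atTop atTop :=
    tendsto_rpow_atTop (by norm_num)
  refine (tendsto_exp_mul_Ai_pow_four.comp hroot).congr' ?_
  filter_upwards [eventually_ge_atTop 0] with w hw
  have hpow_four : (w ^ ((1 : ℝ) / 4)) ^ 4 = w := by
    rw [← rpow_mul_natCast hw]
    norm_num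
  have hpow_six : (w ^ ((1 : ℝ) / 4)) ^ 6 = w ^ ((3 : ℝ) / 2) := by
    rw [← rpow_mul_natCast hw]
    norm_num
  rw [Function.comp_apply, hpow_four, hpow_six]
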